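/- arXiv:2411.13126 — 2 statements merged into one kernel-verified Lean document; each statement's English description precedes it below -/
import Mathlib

section
/- Let u ∈ USC(Γ) (respectively u ∈ LSC(Γ)) and φ ∈ C^1(Γ) be such that u − φ has a local maximum (respectively minimum) at x ∈ \bar{E}_i for some i. Then for every index i with x ∈ \bar{E}_i, the limit I_i u(x) := lim_{δ↓0} I_i[B_δ^c(x)] u(x) exists in the extended reals, and moreover I_i u(x) ∈ [−∞, +∞) (respectively I_i u(x) ∈ (−∞, +∞]). -/
open Set MeasureTheory Filter Topology

namespace Junction

variable {N : ℕ}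

/-- Geodesic distance between the point with coordinate `x` on edge `i` and the point with
coordinate `z` on edge `j` of the junction. -/
noncomputable def rho (i j : Fin N) (x z : ℝ) : ℝ := if i = j then |x - z| else x + z

/-- The edge functions agree at the junction point `O` (coordinate `0` on every edge). -/
def Compat (u : Fin N → ℝ → ℝ) : Prop := ∀ i j : Fin N, u i 0 = u j 0

/-- Lévy-type bounds (with constants `Λ`, `σ`) on the kernels `ν i j`. -/
def KernelBounds (a : Fin N → ℝ) (ν : Fin N → Fin N → ℝ → ℝ → ℝ) (Λ σ : ℝ) : Prop :=
  ∀ i j : Fin N, ∀ x ∈ Icc (0 : ℝ) (a i), ∀ y ∈ Icc (0 : ℝ) (a i), ∀ r : ℝ, 0 < r →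
    0 ≤ ν i j x r ∧ ν i j x r ≤ Λ / r ^ (1 + σ) ∧
      |ν i j x r - ν i j y r| ≤ Λ * |x - y| / r ^ (1 + σ)

/-- Truncated nonlocal operator `I_i[A] u (x)`, integrating over the region `A j ⊆ J_j`
of each edge `j`. -/
noncomputable def Itr (a : Fin N → ℝ) (ν : Fin N → Fin N → ℝ → ℝ → ℝ)
    (u : Fin N → ℝ → ℝ) (i : Fin N) (x : ℝ) (A : Fin N → Set ℝ) : ℝ :=
  ∑ j : Fin N, ∫ z in Ioo (0 : ℝ) (a j) ∩ A j, (u j z - u i x) * ν i j x (rho i j x z)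

/-- The full nonlocal operator `I_i u (x)`. -/
noncomputable def Iop (a : Fin N → ℝ) (ν : Fin N → Fin N → ℝ → ℝ → ℝ)
    (u : Fin N → ℝ → ℝ) (i : Fin N) (x : ℝ) : ℝ :=
  Itr a ν u i x fun _ => univ

/-- Coordinates of the geodesic ball of radius `δ` around the point `x` of edge `i`. -/
def ball (i : Fin N) (x δ : ℝ) : Fin N → Set ℝ := fun j => {z | rho i j x z < δ}

/-- Coordinates of the complement of the geodesic ball of radius `δ`. -/
def ballc (i : Fin N) (x δ : ℝ) : Fin N → Set ℝ := fun j => {z | δ ≤ rho i j x z}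

/-- First derivative (within the edge) of the edge functions. -/
noncomputable def d1 (a : Fin N → ℝ) (φ : Fin N → ℝ → ℝ) (i : Fin N) : ℝ → ℝ :=
  derivWithin (φ i) (Icc 0 (a i))

/-- Second derivative (within the edge) of the edge functions. -/
noncomputable def d2 (a : Fin N → ℝ) (φ : Fin N → ℝ → ℝ) (i : Fin N) : ℝ → ℝ :=
  derivWithin (d1 a φ i) (Icc 0 (a i))

def C1Fun (a : Fin N → ℝ) (φ : Fin N → ℝ → ℝ) : Prop :=
  Compat φ ∧ ∀ i, ContDiffOn ℝ 1 (φ i) (Icc 0 (a i))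

def C2Fun (a : Fin N → ℝ) (φ : Fin N → ℝ → ℝ) : Prop :=
  Compat φ ∧ ∀ i, ContDiffOn ℝ 2 (φ i) (Icc 0 (a i))

def USCFun (a : Fin N → ℝ) (u : Fin N → ℝ → ℝ) : Prop :=
  Compat u ∧ ∀ i, UpperSemicontinuousOn (u i) (Icc 0 (a i))

def LSCFun (a : Fin N → ℝ) (u : Fin N → ℝ → ℝ) : Prop :=
  Compat u ∧ ∀ i, LowerSemicontinuousOn (u i) (Icc 0 (a i))

def ContFun (a : Fin N → ℝ) (u : Fin N → ℝ → ℝ) : Prop :=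
  Compat u ∧ ∀ i, ContinuousOn (u i) (Icc 0 (a i))

def BddFun (a : Fin N → ℝ) (u : Fin N → ℝ → ℝ) : Prop :=
  ∃ M : ℝ, ∀ i, ∀ x ∈ Icc (0 : ℝ) (a i), |u i x| ≤ M

/-- `u - φ` has a maximum over the geodesic ball `B_δ` at the point `x` of edge `i`. -/
def IsMaxOnBall (a : Fin N → ℝ) (u φ : Fin N → ℝ → ℝ) (i : Fin N) (x δ : ℝ) : Prop :=
  ∀ j, ∀ z ∈ Icc (0 : ℝ) (a j), rho i j x z < δ → u j z - φ j z ≤ u i x - φ i x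

/-- `u - φ` has a minimum over the geodesic ball `B_δ` at the point `x` of edge `i`. -/
def IsMinOnBall (a : Fin N → ℝ) (u φ : Fin N → ℝ → ℝ) (i : Fin N) (x δ : ℝ) : Prop :=
  ∀ j, ∀ z ∈ Icc (0 : ℝ) (a j), rho i j x z < δ → u i x - φ i x ≤ u j z - φ j z

/-- Standing assumptions on the Hamiltonians `H_i` with constant `CH`. -/
def HBounds (a : Fin N → ℝ) (H : Fin N → ℝ → ℝ → ℝ) (CH : ℝ) : Prop :=
  (∀ i, ContinuousOn (fun q : ℝ × ℝ => H i q.1 q.2) (Icc 0 (a i) ×ˢ (univ : Set ℝ))) ∧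
  ∀ i, ∀ x ∈ Icc (0 : ℝ) (a i), ∀ y ∈ Icc (0 : ℝ) (a i), ∀ p q : ℝ,
    |H i x p - H i y p| ≤ CH * (1 + |p|) * |x - y| ∧
    |H i x p - H i x q| ≤ CH * |p - q| ∧
    CH⁻¹ * |p| - CH ≤ H i x p ∧ H i x p ≤ CH * (1 + |p|)

/-- First-order truncated operator `G_i^δ(u, φ, p, x)`. -/
noncomputable def G (lam : ℝ) (a : Fin N → ℝ) (ν : Fin N → Fin N → ℝ → ℝ → ℝ)
    (H : Fin N → ℝ → ℝ → ℝ) (u φ : Fin N → ℝ → ℝ) (p : ℝ) (i : Fin N) (x δ : ℝ) : ℝ :=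
  lam * u i x - Itr a ν u i x (ballc i x δ) - Itr a ν φ i x (ball i x δ) + H i x p

/-- Second-order truncated operator with diffusion `mu` and right-hand side `f`. -/
noncomputable def G2 (lam : ℝ) (mu : Fin N → ℝ → ℝ) (a : Fin N → ℝ)
    (ν : Fin N → Fin N → ℝ → ℝ → ℝ) (H : Fin N → ℝ → ℝ → ℝ) (f : Fin N → ℝ → ℝ)
    (u φ : Fin N → ℝ → ℝ) (p : ℝ) (i : Fin N) (x δ : ℝ) : ℝ :=
  lam * u i x - mu i x * d2 a φ i x - Itr a ν u i x (ballc i x δ)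
    - Itr a ν φ i x (ball i x δ) + H i x p - f i x

/-- `u` has γ-Hölder edge functions with constant `K`. -/
def HolderEdge (a : Fin N → ℝ) (u : Fin N → ℝ → ℝ) (γ K : ℝ) : Prop :=
  ∀ i, ∀ x ∈ Icc (0 : ℝ) (a i), ∀ y ∈ Icc (0 : ℝ) (a i), |u i x - u i y| ≤ K * |x - y| ^ γ

/-- The truncated nonlocal operators converge, as `δ ↓ 0`, to the extended real `L`:
this is the definition of `I_i u (x) = L ∈ [-∞,+∞]`. -/
def HasNonlocalLimit (a : Fin N → ℝ) (ν : Fin N → Fin N → ℝ → ℝ → ℝ)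
    (u : Fin N → ℝ → ℝ) (i : Fin N) (x : ℝ) (L : EReal) : Prop :=
  Tendsto (fun δ : ℝ => ((Itr a ν u i x (ballc i x δ) : ℝ) : EReal)) (𝓝[>] (0 : ℝ)) (𝓝 L)

/-- `G_i(u, p, x) ≤ 0`, i.e. `λ u(x) + H_i(x,p) ≤ I_i u(x)` in the extended reals,
including the existence of the limit `I_i u (x)`. -/
def GLimLE (lam : ℝ) (a : Fin N → ℝ) (ν : Fin N → Fin N → ℝ → ℝ → ℝ)
    (H : Fin N → ℝ → ℝ → ℝ) (u : Fin N → ℝ → ℝ) (p : ℝ) (i : Fin N) (x : ℝ) : Prop :=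
  ∃ L : EReal, HasNonlocalLimit a ν u i x L ∧
    ((lam * u i x + H i x p : ℝ) : EReal) ≤ L

/-- `G_i(u, p, x) ≥ 0` in the extended reals, including the existence of `I_i u (x)`. -/
def GLimGE (lam : ℝ) (a : Fin N → ℝ) (ν : Fin N → Fin N → ℝ → ℝ → ℝ)
    (H : Fin N → ℝ → ℝ → ℝ) (u : Fin N → ℝ → ℝ) (p : ℝ) (i : Fin N) (x : ℝ) : Prop :=
  ∃ L : EReal, HasNonlocalLimit a ν u i x L ∧
    L ≤ ((lam * u i x + H i x p : ℝ) : EReal)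

/-- `p` belongs to the superdifferential of `u_i` at `x₀` (relative to `[0, a_i]`). -/
def SuperDiff (a : Fin N → ℝ) (u : Fin N → ℝ → ℝ) (i : Fin N) (x₀ p : ℝ) : Prop :=
  ∀ ε : ℝ, 0 < ε → ∃ δ : ℝ, 0 < δ ∧ ∀ x ∈ Icc (0 : ℝ) (a i), |x - x₀| < δ →
    u i x ≤ u i x₀ + p * (x - x₀) + ε * |x - x₀|

/-- `p` belongs to the subdifferential of `u_i` at `x₀` (relative to `[0, a_i]`). -/
def SubDiff (a : Fin N → ℝ) (u : Fin N → ℝ → ℝ) (i : Fin N) (x₀ p : ℝ) : Prop :=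
  ∀ ε : ℝ, 0 < ε → ∃ δ : ℝ, 0 < δ ∧ ∀ x ∈ Icc (0 : ℝ) (a i), |x - x₀| < δ →
    u i x₀ + p * (x - x₀) - ε * |x - x₀| ≤ u i x

/-- `(p_1,…,p_N)` belongs to the superdifferential `D^+_Γ u(O)` at the junction point. -/
def SuperDiffO (a : Fin N → ℝ) (u : Fin N → ℝ → ℝ) (p : Fin N → ℝ) : Prop :=
  ∀ i, SuperDiff a u i 0 (p i)

/-- `(p_1,…,p_N)` belongs to the subdifferential `D^-_Γ u(O)` at the junction point. -/
def SubDiffO (a : Fin N → ℝ) (u : Fin N → ℝ → ℝ) (p : Fin N → ℝ) : Prop :=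
  ∀ i, SubDiff a u i 0 (p i)

/-- The point with coordinate `x` on edge `i` lies in `Γ^δ`, i.e. at geodesic distance
greater than `δ` from every boundary vertex. -/
def InGammaDelta (a : Fin N → ℝ) (i : Fin N) (x δ : ℝ) : Prop :=
  x ∈ Icc (0 : ℝ) (a i) ∧ ∀ j, δ < rho i j x (a j)

/-- `u` is `K`-Lipschitz on `Γ^δ` for the geodesic distance. -/
def LipschitzOnGammaDelta (a : Fin N → ℝ) (u : Fin N → ℝ → ℝ) (δ K : ℝ) : Prop :=
  ∀ i, ∀ x, InGammaDelta a i x δ → ∀ j, ∀ z, InGammaDelta a j z δ →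
    |u i x - u j z| ≤ K * rho i j x z

/-- `u ∈ C^{2,β}(Γ)`. -/
def C2HolderFun (a : Fin N → ℝ) (β : ℝ) (u : Fin N → ℝ → ℝ) : Prop :=
  ContFun a u ∧ ∀ i, ContDiffOn ℝ 2 (u i) (Icc 0 (a i)) ∧
    ∃ K : ℝ, ∀ x ∈ Icc (0 : ℝ) (a i), ∀ y ∈ Icc (0 : ℝ) (a i),
      |d2 a u i x - d2 a u i y| ≤ K * |x - y| ^ β

/-- A `C^{2,β}`-type norm of `u`, used to express continuous dependence. -/
noncomputable def c2aDist (a : Fin N → ℝ) (β : ℝ) (u : Fin N → ℝ → ℝ) : ℝ :=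
  ∑ i : Fin N,
    (sSup ((fun x => |u i x|) '' Icc (0 : ℝ) (a i)) +
     sSup ((fun x => |d1 a u i x|) '' Icc (0 : ℝ) (a i)) +
     sSup ((fun x => |d2 a u i x|) '' Icc (0 : ℝ) (a i)) +
     sSup ((fun q : ℝ × ℝ => |d2 a u i q.1 - d2 a u i q.2| / |q.1 - q.2| ^ β) ''
       {q : ℝ × ℝ | q.1 ∈ Icc (0 : ℝ) (a i) ∧ q.2 ∈ Icc (0 : ℝ) (a i) ∧ q.1 ≠ q.2}))

/-- The constant `C₀` from the paper. -/
noncomputable def C0 (lam θ : ℝ) (a : Fin N → ℝ) (H : Fin N → ℝ → ℝ → ℝ)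
    (h : Fin N → ℝ) : ℝ :=
  (min lam 1)⁻¹ * ((⨆ i, sSup ((fun x => |H i x 0|) '' Icc (0 : ℝ) (a i))) + |θ| + ⨆ i, |h i|)

/-- The barrier profile `ψ_{L,δ}`. -/
noncomputable def psi (α L δ x : ℝ) : ℝ :=
  if x ≤ δ then L * (x - x ^ (1 + α)) else L * (δ - δ ^ (1 + α))

/-- Second-order viscosity subsolution inequalities inside the edges (with diffusion `mu`
and right-hand side `f`), tested with `C²` test functions. -/
def EdgeSub2 (lam : ℝ) (mu : Fin N → ℝ → ℝ) (a : Fin N → ℝ)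
    (ν : Fin N → Fin N → ℝ → ℝ → ℝ) (H : Fin N → ℝ → ℝ → ℝ) (f : Fin N → ℝ → ℝ)
    (u : Fin N → ℝ → ℝ) : Prop :=
  USCFun a u ∧ ∀ i, ∀ x ∈ Ioo (0 : ℝ) (a i), ∀ δ : ℝ, 0 < δ → ∀ φ, C2Fun a φ →
    IsMaxOnBall a u φ i x δ → G2 lam mu a ν H f u φ (d1 a φ i x) i x δ ≤ 0

/-- Second-order viscosity supersolution inequalities inside the edges. -/
def EdgeSuper2 (lam : ℝ) (mu : Fin N → ℝ → ℝ) (a : Fin N → ℝ)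
    (ν : Fin N → Fin N → ℝ → ℝ → ℝ) (H : Fin N → ℝ → ℝ → ℝ) (f : Fin N → ℝ → ℝ)
    (u : Fin N → ℝ → ℝ) : Prop :=
  LSCFun a u ∧ ∀ i, ∀ x ∈ Ioo (0 : ℝ) (a i), ∀ δ : ℝ, 0 < δ → ∀ φ, C2Fun a φ →
    IsMinOnBall a u φ i x δ → 0 ≤ G2 lam mu a ν H f u φ (d1 a φ i x) i x δ

section WithJunction

variable [NeZero N]

/-- Pointwise subsolution condition at an interior point of edge `i`. -/
def SubEdgePt (lam : ℝ) (a : Fin N → ℝ) (ν : Fin N → Fin N → ℝ → ℝ → ℝ)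
    (H : Fin N → ℝ → ℝ → ℝ) (u : Fin N → ℝ → ℝ) (i : Fin N) (x : ℝ) : Prop :=
  ∀ δ : ℝ, 0 < δ → ∀ φ, C1Fun a φ → IsMaxOnBall a u φ i x δ →
    G lam a ν H u φ (d1 a φ i x) i x δ ≤ 0

/-- Pointwise supersolution condition at an interior point of edge `i`. -/
def SuperEdgePt (lam : ℝ) (a : Fin N → ℝ) (ν : Fin N → Fin N → ℝ → ℝ → ℝ)
    (H : Fin N → ℝ → ℝ → ℝ) (u : Fin N → ℝ → ℝ) (i : Fin N) (x : ℝ) : Prop :=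
  ∀ δ : ℝ, 0 < δ → ∀ φ, C1Fun a φ → IsMinOnBall a u φ i x δ →
    0 ≤ G lam a ν H u φ (d1 a φ i x) i x δ

/-- Pointwise subsolution (Kirchhoff) condition at the junction point `O`. -/
def SubOPt (lam : ℝ) (a : Fin N → ℝ) (ν : Fin N → Fin N → ℝ → ℝ → ℝ)
    (H : Fin N → ℝ → ℝ → ℝ) (B : ℝ) (u : Fin N → ℝ → ℝ) : Prop :=
  ∀ δ : ℝ, 0 < δ → ∀ φ, C1Fun a φ → IsMaxOnBall a u φ 0 0 δ →
    (∃ i, G lam a ν H u φ (d1 a φ i 0) i 0 δ ≤ 0) ∨ (∑ i, -(d1 a φ i 0)) ≤ B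

/-- Pointwise supersolution (Kirchhoff) condition at the junction point `O`. -/
def SuperOPt (lam : ℝ) (a : Fin N → ℝ) (ν : Fin N → Fin N → ℝ → ℝ → ℝ)
    (H : Fin N → ℝ → ℝ → ℝ) (B : ℝ) (u : Fin N → ℝ → ℝ) : Prop :=
  ∀ δ : ℝ, 0 < δ → ∀ φ, C1Fun a φ → IsMinOnBall a u φ 0 0 δ →
    (∃ i, 0 ≤ G lam a ν H u φ (d1 a φ i 0) i 0 δ) ∨ B ≤ (∑ i, -(d1 a φ i 0))

/-- Pointwise subsolution (Dirichlet) condition at the boundary vertex `v̄_i`. -/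
def SubVPt (lam : ℝ) (a : Fin N → ℝ) (ν : Fin N → Fin N → ℝ → ℝ → ℝ)
    (H : Fin N → ℝ → ℝ → ℝ) (h : Fin N → ℝ) (u : Fin N → ℝ → ℝ) (i : Fin N) : Prop :=
  ∀ δ : ℝ, 0 < δ → ∀ φ, C1Fun a φ → IsMaxOnBall a u φ i (a i) δ →
    G lam a ν H u φ (d1 a φ i (a i)) i (a i) δ ≤ 0 ∨ u i (a i) ≤ h i

/-- Pointwise supersolution (Dirichlet) condition at the boundary vertex `v̄_i`. -/
def SuperVPt (lam : ℝ) (a : Fin N → ℝ) (ν : Fin N → Fin N → ℝ → ℝ → ℝ)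
    (H : Fin N → ℝ → ℝ → ℝ) (h : Fin N → ℝ) (u : Fin N → ℝ → ℝ) (i : Fin N) : Prop :=
  ∀ δ : ℝ, 0 < δ → ∀ φ, C1Fun a φ → IsMinOnBall a u φ i (a i) δ →
    0 ≤ G lam a ν H u φ (d1 a φ i (a i)) i (a i) δ ∨ h i ≤ u i (a i)

/-- Viscosity subsolution of the equation on the edges together with the Kirchhoff
condition at `O` (no boundary condition at the boundary vertices). -/
def KirchhoffSubNoBC (lam : ℝ) (a : Fin N → ℝ) (ν : Fin N → Fin N → ℝ → ℝ → ℝ)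
    (H : Fin N → ℝ → ℝ → ℝ) (B : ℝ) (u : Fin N → ℝ → ℝ) : Prop :=
  USCFun a u ∧ (∀ i, ∀ x ∈ Ioo (0 : ℝ) (a i), SubEdgePt lam a ν H u i x) ∧
    SubOPt lam a ν H B u

/-- Viscosity subsolution of the Kirchhoff problem (equation on the edges, Kirchhoff
condition at `O`, Dirichlet condition at the boundary vertices). -/
def KirchhoffSub (lam : ℝ) (a : Fin N → ℝ) (ν : Fin N → Fin N → ℝ → ℝ → ℝ)
    (H : Fin N → ℝ → ℝ → ℝ) (B : ℝ) (h : Fin N → ℝ) (u : Fin N → ℝ → ℝ) : Prop :=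
  KirchhoffSubNoBC lam a ν H B u ∧ ∀ i, SubVPt lam a ν H h u i

/-- Viscosity supersolution of the equation together with the Kirchhoff condition at `O`. -/
def KirchhoffSuperNoBC (lam : ℝ) (a : Fin N → ℝ) (ν : Fin N → Fin N → ℝ → ℝ → ℝ)
    (H : Fin N → ℝ → ℝ → ℝ) (B : ℝ) (u : Fin N → ℝ → ℝ) : Prop :=
  LSCFun a u ∧ (∀ i, ∀ x ∈ Ioo (0 : ℝ) (a i), SuperEdgePt lam a ν H u i x) ∧
    SuperOPt lam a ν H B u

/-- Viscosity supersolution of the Kirchhoff problem. -/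
def KirchhoffSuper (lam : ℝ) (a : Fin N → ℝ) (ν : Fin N → Fin N → ℝ → ℝ → ℝ)
    (H : Fin N → ℝ → ℝ → ℝ) (B : ℝ) (h : Fin N → ℝ) (u : Fin N → ℝ → ℝ) : Prop :=
  KirchhoffSuperNoBC lam a ν H B u ∧ ∀ i, SuperVPt lam a ν H h u i

/-- Viscosity subsolution of the viscous Dirichlet problem (vanishing viscosity `eps`,
Dirichlet data `θ` at `O` and `h i` at `v̄_i`, generalized boundary conditions). -/
def VDSub (lam eps θ : ℝ) (a : Fin N → ℝ) (ν : Fin N → Fin N → ℝ → ℝ → ℝ)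
    (H : Fin N → ℝ → ℝ → ℝ) (h : Fin N → ℝ) (u : Fin N → ℝ → ℝ) : Prop :=
  USCFun a u ∧
  (∀ i, ∀ x ∈ Ioo (0 : ℝ) (a i), ∀ δ : ℝ, 0 < δ → ∀ φ, C2Fun a φ →
    IsMaxOnBall a u φ i x δ →
    G2 lam (fun _ _ => eps) a ν H (fun _ _ => 0) u φ (d1 a φ i x) i x δ ≤ 0) ∧
  (∀ δ : ℝ, 0 < δ → ∀ φ, C2Fun a φ → IsMaxOnBall a u φ 0 0 δ →
    (∃ i, G2 lam (fun _ _ => eps) a ν H (fun _ _ => 0) u φ (d1 a φ i 0) i 0 δ ≤ 0) ∨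
      u 0 0 ≤ θ) ∧
  (∀ i, ∀ δ : ℝ, 0 < δ → ∀ φ, C2Fun a φ → IsMaxOnBall a u φ i (a i) δ →
    G2 lam (fun _ _ => eps) a ν H (fun _ _ => 0) u φ (d1 a φ i (a i)) i (a i) δ ≤ 0 ∨
      u i (a i) ≤ h i)

/-- Viscosity supersolution of the viscous Dirichlet problem. -/
def VDSuper (lam eps θ : ℝ) (a : Fin N → ℝ) (ν : Fin N → Fin N → ℝ → ℝ → ℝ)
    (H : Fin N → ℝ → ℝ → ℝ) (h : Fin N → ℝ) (u : Fin N → ℝ → ℝ) : Prop :=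
  LSCFun a u ∧
  (∀ i, ∀ x ∈ Ioo (0 : ℝ) (a i), ∀ δ : ℝ, 0 < δ → ∀ φ, C2Fun a φ →
    IsMinOnBall a u φ i x δ →
    0 ≤ G2 lam (fun _ _ => eps) a ν H (fun _ _ => 0) u φ (d1 a φ i x) i x δ) ∧
  (∀ δ : ℝ, 0 < δ → ∀ φ, C2Fun a φ → IsMinOnBall a u φ 0 0 δ →
    (∃ i, 0 ≤ G2 lam (fun _ _ => eps) a ν H (fun _ _ => 0) u φ (d1 a φ i 0) i 0 δ) ∨
      θ ≤ u 0 0) ∧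
  (∀ i, ∀ δ : ℝ, 0 < δ → ∀ φ, C2Fun a φ → IsMinOnBall a u φ i (a i) δ →
    0 ≤ G2 lam (fun _ _ => eps) a ν H (fun _ _ => 0) u φ (d1 a φ i (a i)) i (a i) δ ∨
      h i ≤ u i (a i))

end WithJunction

/-- The nonincreasing part `H⁻` of a convex Hamiltonian with minimum point `p0`. -/
noncomputable def Hminus (H : Fin N → ℝ → ℝ → ℝ) (p0 : Fin N → ℝ → ℝ) :
    Fin N → ℝ → ℝ → ℝ :=
  fun i x p => if p ≤ p0 i x then H i x (p0 i x) else H i x p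

/-- The nondecreasing part `H⁺` of a convex Hamiltonian with minimum point `p0`. -/
noncomputable def Hplus (H : Fin N → ℝ → ℝ → ℝ) (p0 : Fin N → ℝ → ℝ) :
    Fin N → ℝ → ℝ → ℝ :=
  fun i x p => if p ≤ p0 i x then H i x p else H i x (p0 i x)

/-- Each `H_i(x, ·)` is convex with unique minimum point `p0 i x`. -/
def ConvexUniqueMin (a : Fin N → ℝ) (H : Fin N → ℝ → ℝ → ℝ) (p0 : Fin N → ℝ → ℝ) : Prop :=
  ∀ i, ∀ x ∈ Icc (0 : ℝ) (a i),
    ConvexOn ℝ univ (fun p => H i x p) ∧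
    (∀ p : ℝ, H i x (p0 i x) ≤ H i x p) ∧
    ∀ p : ℝ, H i x p = H i x (p0 i x) → p = p0 i x

section FluxLimited

variable [NeZero N]

/-- The truncated flux limiter `FL^{-,δ}(u, φ, O)`. -/
noncomputable def FLdelta (lam : ℝ) (a : Fin N → ℝ) (ν : Fin N → Fin N → ℝ → ℝ → ℝ)
    (H : Fin N → ℝ → ℝ → ℝ) (p0 : Fin N → ℝ → ℝ) (B : ℝ)
    (u φ : Fin N → ℝ → ℝ) (δ : ℝ) : ℝ :=
  ⨅ p : Fin N → ℝ,
    max (⨆ i, G lam a ν (Hminus H p0) u φ (p i) i 0 δ) ((∑ i, -(p i)) - B)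

/-- Flux-limited subsolution condition at the junction point `O` (test-function form). -/
def FLSubO (lam : ℝ) (a : Fin N → ℝ) (ν : Fin N → Fin N → ℝ → ℝ → ℝ)
    (H : Fin N → ℝ → ℝ → ℝ) (p0 : Fin N → ℝ → ℝ) (B : ℝ) (u : Fin N → ℝ → ℝ) : Prop :=
  ∀ δ : ℝ, 0 < δ → ∀ φ, C1Fun a φ → IsMaxOnBall a u φ 0 0 δ →
    (∀ i, G lam a ν (Hplus H p0) u φ (d1 a φ i 0) i 0 δ ≤ 0) ∧
    FLdelta lam a ν H p0 B u φ δ ≤ 0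

/-- Flux-limited supersolution condition at the junction point `O` (test-function form). -/
def FLSuperO (lam : ℝ) (a : Fin N → ℝ) (ν : Fin N → Fin N → ℝ → ℝ → ℝ)
    (H : Fin N → ℝ → ℝ → ℝ) (p0 : Fin N → ℝ → ℝ) (B : ℝ) (u : Fin N → ℝ → ℝ) : Prop :=
  ∀ δ : ℝ, 0 < δ → ∀ φ, C1Fun a φ → IsMinOnBall a u φ 0 0 δ →
    (∃ i, 0 ≤ G lam a ν (Hplus H p0) u φ (d1 a φ i 0) i 0 δ) ∨
    0 ≤ FLdelta lam a ν H p0 B u φ δ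

/-- Viscosity flux-limited subsolution. -/
def FLSub (lam : ℝ) (a : Fin N → ℝ) (ν : Fin N → Fin N → ℝ → ℝ → ℝ)
    (H : Fin N → ℝ → ℝ → ℝ) (p0 : Fin N → ℝ → ℝ) (B : ℝ) (h : Fin N → ℝ)
    (u : Fin N → ℝ → ℝ) : Prop :=
  USCFun a u ∧ (∀ i, ∀ x ∈ Ioo (0 : ℝ) (a i), SubEdgePt lam a ν H u i x) ∧
    FLSubO lam a ν H p0 B u ∧ ∀ i, SubVPt lam a ν H h u i

/-- Viscosity flux-limited supersolution. -/
def FLSuper (lam : ℝ) (a : Fin N → ℝ) (ν : Fin N → Fin N → ℝ → ℝ → ℝ)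
    (H : Fin N → ℝ → ℝ → ℝ) (p0 : Fin N → ℝ → ℝ) (B : ℝ) (h : Fin N → ℝ)
    (u : Fin N → ℝ → ℝ) : Prop :=
  LSCFun a u ∧ (∀ i, ∀ x ∈ Ioo (0 : ℝ) (a i), SuperEdgePt lam a ν H u i x) ∧
    FLSuperO lam a ν H p0 B u ∧ ∀ i, SuperVPt lam a ν H h u i

/-- The flux limiter `FL^-(u, O)` in the extended reals, given the values
`L i = I_i u (O)` of the nonlocal operators at the junction. -/
noncomputable def FLlim (lam : ℝ) (H : Fin N → ℝ → ℝ → ℝ) (p0 : Fin N → ℝ → ℝ)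
    (B : ℝ) (u : Fin N → ℝ → ℝ) (L : Fin N → EReal) : EReal :=
  ⨅ p : Fin N → ℝ,
    max (⨆ i, (((lam * u i 0 + Hminus H p0 i 0 (p i) : ℝ) : EReal) - L i))
      (((∑ i, -(p i)) - B : ℝ) : EReal)

/-- Pointwise flux-limited subsolution condition at `O`, expressed through the
superdifferential `D^+_Γ u(O)` and the limits `I_i u(O)`. -/
def FLPointSubO (lam : ℝ) (a : Fin N → ℝ) (ν : Fin N → Fin N → ℝ → ℝ → ℝ)
    (H : Fin N → ℝ → ℝ → ℝ) (p0 : Fin N → ℝ → ℝ) (B : ℝ) (u : Fin N → ℝ → ℝ) : Prop :=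
  ∀ p : Fin N → ℝ, SuperDiffO a u p →
    ∃ L : Fin N → EReal, (∀ i, HasNonlocalLimit a ν u i 0 (L i)) ∧
      (∀ i, ((lam * u i 0 + Hplus H p0 i 0 (p i) : ℝ) : EReal) ≤ L i) ∧
      FLlim lam H p0 B u L ≤ 0

/-- Pointwise flux-limited supersolution condition at `O`. -/
def FLPointSuperO (lam : ℝ) (a : Fin N → ℝ) (ν : Fin N → Fin N → ℝ → ℝ → ℝ)
    (H : Fin N → ℝ → ℝ → ℝ) (p0 : Fin N → ℝ → ℝ) (B : ℝ) (u : Fin N → ℝ → ℝ) : Prop :=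
  ∀ p : Fin N → ℝ, SubDiffO a u p →
    ∃ L : Fin N → EReal, (∀ i, HasNonlocalLimit a ν u i 0 (L i)) ∧
      ((∃ i, L i ≤ ((lam * u i 0 + Hplus H p0 i 0 (p i) : ℝ) : EReal)) ∨
        0 ≤ FLlim lam H p0 B u L)

end FluxLimited


theorem aux_abstract (S : Set ℝ) (hS : MeasurableSet S) (r f h : ℝ → ℝ) (hr : Measurable r)
    (hh : IntegrableOn h S) (h0 : ∀ z ∈ S, 0 ≤ h z) (hf : ∀ z ∈ S, 0 < r z → f z ≤ h z) :
    ∃ L : EReal, Tendsto (fun δ : ℝ => ((∫ z in S ∩ {z | δ ≤ r z}, f z : ℝ) : EReal))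
      (𝓝[>] (0 : ℝ)) (𝓝 L) ∧ L ≠ ⊤ := by
  by_cases hI : ∀ δ : ℝ, 0 < δ → IntegrableOn f (S ∩ {z | δ ≤ r z})
  · have hms : ∀ δ : ℝ, MeasurableSet (S ∩ {z | δ ≤ r z}) := fun δ =>
      hS.inter (measurableSet_le measurable_const hr)
    have hhI : ∀ δ : ℝ, IntegrableOn h (S ∩ {z | δ ≤ r z}) := fun δ =>
      hh.mono_set inter_subset_left
    have hsub : ∀ δ ε : ℝ, δ ≤ ε → S ∩ {z | ε ≤ r z} ⊆ S ∩ {z | δ ≤ r z} :=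
      fun δ ε hle z hz => ⟨hz.1, le_trans hle hz.2⟩
    set A : ℝ → ℝ := fun δ => ∫ z in S ∩ {z | δ ≤ r z}, h z with hA
    set B : ℝ → ℝ := fun δ => ∫ z in S ∩ {z | δ ≤ r z}, (h z - f z) with hB
    have hAanti : AntitoneOn A (Ioi 0) := by
      intro δ _ ε _ hle
      refine setIntegral_mono_set (hhI δ) ?_ (hsub δ ε hle).eventuallyLE
      exact (ae_restrict_iff' (hms δ)).2 (Eventually.of_forall fun z hz => h0 z hz.1)
    have hAb : BddAbove (A '' Ioi 0) := by
      refine ⟨∫ z in S, h z, ?_⟩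
      rintro _ ⟨δ, _, rfl⟩
      refine setIntegral_mono_set hh ?_ inter_subset_left.eventuallyLE
      exact (ae_restrict_iff' hS).2 (Eventually.of_forall fun z hz => h0 z hz)
    have hpos : ∀ δ : ℝ, 0 < δ → 0 ≤ B δ := by
      intro δ hδ
      refine setIntegral_nonneg (hms δ) fun z hz => ?_
      have := hf z hz.1 (lt_of_lt_of_le hδ hz.2)
      linarith
    have hBanti : AntitoneOn (fun δ => ((B δ : ℝ) : EReal)) (Ioi 0) := by
      intro δ hδ ε _ hle
      refine EReal.coe_le_coe_iff.2 ?_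
      refine setIntegral_mono_set ((hhI δ).sub (hI δ hδ)) ?_ (hsub δ ε hle).eventuallyLE
      refine (ae_restrict_iff' (hms δ)).2 (Eventually.of_forall fun z hz => ?_)
      have := hf z hz.1 (lt_of_lt_of_le hδ hz.2)
      simp only [Pi.zero_apply]
      linarith
    have hAt := hAanti.tendsto_nhdsGT hAb
    have hBt := hBanti.tendsto_nhdsGT (OrderTop.bddAbove _)
    set a₀ := sSup (A '' Ioi 0)
    set b₀ := sSup ((fun δ => ((B δ : ℝ) : EReal)) '' Ioi 0) with hb₀
    have hb0 : b₀ ≠ ⊥ := by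
      have h1 : ((B 1 : ℝ) : EReal) ≤ b₀ := le_sSup ⟨1, by simp, rfl⟩
      intro hbot
      rw [hbot] at h1
      exact absurd (le_bot_iff.1 h1) (EReal.coe_ne_bot _)
    have hb1 : -b₀ ≠ ⊤ := by
      rw [Ne, EReal.neg_eq_top_iff]; exact hb0
    refine ⟨(a₀ : EReal) + -b₀, ?_, EReal.add_ne_top (EReal.coe_ne_top _) hb1⟩
    have hA' : Tendsto (fun δ => ((A δ : ℝ) : EReal)) (𝓝[>] 0) (𝓝 (a₀ : EReal)) :=
      (continuous_coe_real_ereal.tendsto a₀).comp hAt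
    have hB' : Tendsto (fun δ => -((B δ : ℝ) : EReal)) (𝓝[>] 0) (𝓝 (-b₀)) :=
      (continuous_neg.tendsto b₀).comp hBt
    have hc : ContinuousAt (fun p : EReal × EReal => p.1 + p.2) ((a₀ : EReal), -b₀) :=
      EReal.continuousAt_add (Or.inl (EReal.coe_ne_top _)) (Or.inl (EReal.coe_ne_bot _))
    have hAB := hc.tendsto.comp (hA'.prodMk_nhds hB')
    refine hAB.congr' ?_
    filter_upwards [self_mem_nhdsWithin] with δ hδ
    have : B δ = A δ - ∫ z in S ∩ {z | δ ≤ r z}, f z := integral_sub (hhI δ) (hI δ hδ)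
    simp only [Function.comp]
    rw [← EReal.coe_neg, ← EReal.coe_add, this]
    congr 1
    ring
  · push Not at hI
    obtain ⟨δ₁, hδ₁, hn⟩ := hI
    refine ⟨0, ?_, EReal.zero_ne_top⟩
    refine tendsto_const_nhds.congr' ?_
    filter_upwards [Ioo_mem_nhdsGT hδ₁] with δ hδ
    have : ¬ IntegrableOn f (S ∩ {z | δ ≤ r z}) := fun hc =>
      hn (hc.mono_set fun z hz => ⟨hz.1, le_trans hδ.2.le hz.2⟩)
    rw [integral_undef this]
    rfl

theorem aux_rpow (c b σ : ℝ) (hσ1 : σ < 1) :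
    IntegrableOn (fun z : ℝ => |c - z| ^ (-σ)) (Ioo 0 b) := by
  have h1 : LocallyIntegrable (fun z : ℝ => |z| ^ (-σ)) volume := by
    refine locallyIntegrable_of_norm_le_rpow (C := 1) (α := σ) (by simp) (by simpa using hσ1) ?_ ?_
    · refine Eventually.of_forall fun z => ?_
      rw [Real.norm_of_nonneg (by positivity), one_mul, Real.norm_eq_abs]
    · exact (measurable_norm.pow_const (-σ)).aestronglyMeasurable
  have h2 : IntegrableOn (fun z : ℝ => |z| ^ (-σ)) (Icc (c - b) c) :=
    h1.integrableOn_isCompact isCompact_Icc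
  have h3 := (Measure.measurePreserving_sub_left (volume : Measure ℝ) c).integrableOn_comp_preimage
    (Homeomorph.subLeft c).measurableEmbedding (f := fun z : ℝ => |z| ^ (-σ))
    (s := Icc (c - b) c)
  refine IntegrableOn.mono_set (h3.2 h2) ?_
  intro z hz
  simp only [mem_preimage, mem_Icc]
  constructor <;> linarith [hz.1, hz.2]

theorem aux_lip {N : ℕ} (a : Fin N → ℝ) (u φ : Fin N → ℝ → ℝ) (hφ : C1Fun a φ)
    (hb : BddFun a u) (i j : Fin N) (x : ℝ) (hx : x ∈ Icc (0 : ℝ) (a i)) (δ₀ : ℝ) (hδ : 0 < δ₀)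
    (hmax : IsMaxOnBall a u φ i x δ₀) (ha : ∀ i, 0 < a i) :
    ∃ K : ℝ, 0 ≤ K ∧ ∀ z ∈ Icc (0 : ℝ) (a j), u j z - u i x ≤ K * rho i j x z := by
  obtain ⟨M, hM⟩ := hb
  have hM0 : 0 ≤ M := (abs_nonneg _).trans (hM i x hx)
  have hL : ∀ k, ∃ K : ℝ, 0 ≤ K ∧ ∀ y ∈ Icc (0 : ℝ) (a k), ∀ z ∈ Icc (0 : ℝ) (a k),
      |φ k y - φ k z| ≤ K * |y - z| := by
    intro k
    obtain ⟨K, hK⟩ := (hφ.2 k).exists_lipschitzOnWith one_ne_zero (convex_Icc _ _) isCompact_Icc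
    refine ⟨K, K.2, fun y hy z hz => ?_⟩
    have := hK.dist_le_mul y hy z hz
    simpa [Real.dist_eq] using this
  obtain ⟨Ki, hKi0, hKi⟩ := hL i
  obtain ⟨Kj, hKj0, hKj⟩ := hL j
  have hzi : (0 : ℝ) ∈ Icc (0 : ℝ) (a i) := ⟨le_rfl, (ha i).le⟩
  have hzj : (0 : ℝ) ∈ Icc (0 : ℝ) (a j) := ⟨le_rfl, (ha j).le⟩
  have hq : 0 ≤ 2 * M / δ₀ := by positivity
  refine ⟨Ki + Kj + 2 * M / δ₀, by positivity, fun z hz => ?_⟩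
  have hr0 : 0 ≤ rho i j x z := by
    unfold rho; split_ifs
    · exact abs_nonneg _
    · linarith [hx.1, hz.1]
  have hphi : φ j z - φ i x ≤ (Ki + Kj) * rho i j x z := by
    by_cases hij : i = j
    · subst hij
      have h1 := hKi z hz x hx
      have h2 : rho i i x z = |z - x| := by simp [rho, abs_sub_comm]
      rw [h2]
      nlinarith [le_abs_self (φ i z - φ i x), mul_nonneg hKj0 (abs_nonneg (z - x))]
    · have h2 : rho i j x z = x + z := by simp [rho, hij]
      have h1 := (le_abs_self _).trans (hKj z hz 0 hzj)
      have h3 := (le_abs_self _).trans (hKi 0 hzi x hx)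
      have h4 := hφ.1 i j
      rw [sub_zero, abs_of_nonneg hz.1] at h1
      rw [zero_sub, abs_neg, abs_of_nonneg hx.1] at h3
      rw [h2]
      nlinarith [mul_nonneg hKi0 hz.1, mul_nonneg hKj0 hx.1]
  by_cases hlt : rho i j x z < δ₀
  · have := hmax j z hz hlt
    nlinarith [mul_nonneg hq hr0]
  · push Not at hlt
    have h1 := abs_le.1 (hM j z hz)
    have h2 := abs_le.1 (hM i x hx)
    have h3 : 2 * M / δ₀ * δ₀ = 2 * M := by field_simp
    have h4 := mul_le_mul_of_nonneg_left hlt hq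
    nlinarith [mul_nonneg hKi0 hr0, mul_nonneg hKj0 hr0]

theorem aux_edge {N : ℕ} (a : Fin N → ℝ) (ha : ∀ i, 0 < a i)
    (ν : Fin N → Fin N → ℝ → ℝ → ℝ) (Λ σ : ℝ)
    (hΛ : 0 < Λ) (hσ1 : σ < 1) (hν : KernelBounds a ν Λ σ)
    (u φ : Fin N → ℝ → ℝ) (hφ : C1Fun a φ) (hb : BddFun a u)
    (i j : Fin N) (x : ℝ) (hx : x ∈ Icc (0 : ℝ) (a i)) (δ₀ : ℝ) (hδ : 0 < δ₀)
    (hmax : IsMaxOnBall a u φ i x δ₀) :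
    ∃ L : EReal, Tendsto (fun δ : ℝ => ((∫ z in Ioo (0 : ℝ) (a j) ∩ ballc i x δ j,
      (u j z - u i x) * ν i j x (rho i j x z) : ℝ) : EReal)) (𝓝[>] (0 : ℝ)) (𝓝 L) ∧ L ≠ ⊤ := by
  obtain ⟨K, hK0, hK⟩ := aux_lip a u φ hφ hb i j x hx δ₀ hδ hmax ha
  obtain ⟨c, hc⟩ : ∃ c : ℝ, ∀ z ∈ Ioo (0 : ℝ) (a j), rho i j x z = |c - z| := by
    by_cases hij : i = j
    · exact ⟨x, fun z _ => by simp [rho, hij]⟩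
    · refine ⟨-x, fun z hz => ?_⟩
      have : -x - z = -(x + z) := by ring
      rw [this, abs_neg, abs_of_nonneg (by linarith [hx.1, hz.1])]
      simp [rho, hij]
  refine aux_abstract (Ioo 0 (a j)) measurableSet_Ioo (rho i j x)
    (fun z => (u j z - u i x) * ν i j x (rho i j x z))
    (fun z => K * Λ * |c - z| ^ (-σ)) ?_ ?_ ?_ ?_
  · unfold rho
    split_ifs <;> fun_prop
  · exact (aux_rpow c (a j) σ hσ1).const_mul _
  · intro z _
    positivity
  · intro z hz hr
    obtain ⟨hn0, hn1, _⟩ := hν i j x hx x hx _ hr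
    have h1 := hK z (Ioo_subset_Icc_self hz)
    have h2 : (u j z - u i x) * ν i j x (rho i j x z)
        ≤ K * rho i j x z * (Λ / rho i j x z ^ (1 + σ)) :=
      (mul_le_mul_of_nonneg_right h1 hn0).trans
        (mul_le_mul_of_nonneg_left hn1 (by positivity))
    refine h2.trans (le_of_eq ?_)
    rw [← hc z hz, Real.rpow_neg hr.le, Real.rpow_add hr, Real.rpow_one]
    field_simp

theorem aux_sum {ι : Type*} (s : Finset ι) (F : ι → ℝ → ℝ) (l : Filter ℝ)
    (h : ∀ j, ∃ L : EReal, Tendsto (fun δ => ((F j δ : ℝ) : EReal)) l (𝓝 L) ∧ L ≠ ⊤) :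
    ∃ L : EReal, Tendsto (fun δ => ((∑ j ∈ s, F j δ : ℝ) : EReal)) l (𝓝 L) ∧ L ≠ ⊤ := by
  classical
  induction s using Finset.induction_on with
  | empty => exact ⟨0, by simpa using tendsto_const_nhds, EReal.zero_ne_top⟩
  | insert j s hj ih =>
    obtain ⟨L₁, h₁, t₁⟩ := h j
    obtain ⟨L₂, h₂, t₂⟩ := ih
    refine ⟨L₁ + L₂, ?_, EReal.add_ne_top t₁ t₂⟩
    have hc : ContinuousAt (fun p : EReal × EReal => p.1 + p.2) (L₁, L₂) :=
      EReal.continuousAt_add (Or.inl t₁) (Or.inr t₂)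
    refine (hc.tendsto.comp (h₁.prodMk_nhds h₂)).congr fun δ => ?_
    simp only [Function.comp, Finset.sum_insert hj, EReal.coe_add]

theorem aux_main {N : ℕ} (a : Fin N → ℝ) (ha : ∀ i, 0 < a i)
    (ν : Fin N → Fin N → ℝ → ℝ → ℝ) (Λ σ : ℝ)
    (hΛ : 0 < Λ) (hσ1 : σ < 1) (hν : KernelBounds a ν Λ σ)
    (u φ : Fin N → ℝ → ℝ) (hφ : C1Fun a φ) (hb : BddFun a u) (hu : Compat u)
    (i : Fin N) (x : ℝ) (hx : x ∈ Icc (0 : ℝ) (a i))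
    (hm : ∃ δ₀ : ℝ, 0 < δ₀ ∧ IsMaxOnBall a u φ i x δ₀) (i' : Fin N) (hi : i' = i ∨ x = 0) :
    ∃ L : EReal, HasNonlocalLimit a ν u i' (if i' = i then x else 0) L ∧ L ≠ ⊤ := by
  obtain ⟨δ₀, hδ, hmax⟩ := hm
  have key : ∃ y, y = (if i' = i then x else 0) ∧ y ∈ Icc (0 : ℝ) (a i') ∧
      IsMaxOnBall a u φ i' y δ₀ := by
    by_cases h : i' = i
    · subst h
      exact ⟨x, by simp, hx, hmax⟩
    · have hx0 : x = 0 := hi.resolve_left h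
      subst hx0
      refine ⟨0, by simp, ⟨le_rfl, (ha i').le⟩, fun j z hz hr => ?_⟩
      rw [hu i' i, hφ.1 i' i]
      refine hmax j z hz ?_
      have e : ∀ k : Fin N, rho k j 0 z = z := by
        intro k
        unfold rho
        split_ifs
        · simp [abs_of_nonneg hz.1]
        · simp
      rw [e] at hr ⊢
      exact hr
  obtain ⟨y, hy, hyI, hym⟩ := key
  rw [← hy]
  exact aux_sum Finset.univ _ _ fun j =>
    aux_edge a ha ν Λ σ hΛ hσ1 hν u φ hφ hb i' j y hyI δ₀ hδ hym

/-- If `u ∈ USC(Γ)` (resp. `LSC(Γ)`) and `φ ∈ C¹(Γ)` are such that `u - φ`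
has a local maximum (resp. minimum) at the point with coordinate `x` on edge `i`, then for
every index `i'` of an edge containing this point the limit
`I_{i'} u(x) = lim_{δ↓0} I_{i'}[B_δ^c(x)] u(x)` exists in the extended reals and belongs to
`[-∞, +∞)` (resp. `(-∞, +∞]`). -/
theorem nonlocal_limit_at_touched_points
    {N : ℕ} [NeZero N] (a : Fin N → ℝ) (ha : ∀ i, 0 < a i)
    (ν : Fin N → Fin N → ℝ → ℝ → ℝ) (Λ σ : ℝ)
    (hΛ : 0 < Λ) (hσ0 : 0 < σ) (hσ1 : σ < 1) (hν : KernelBounds a ν Λ σ)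
    (u φ : Fin N → ℝ → ℝ) (hφ : C1Fun a φ) (hb : BddFun a u)
    (i : Fin N) (x : ℝ) (hx : x ∈ Icc (0 : ℝ) (a i)) :
    (USCFun a u → (∃ δ₀ : ℝ, 0 < δ₀ ∧ IsMaxOnBall a u φ i x δ₀) →
      ∀ i' : Fin N, i' = i ∨ x = 0 →
        ∃ L : EReal, HasNonlocalLimit a ν u i' (if i' = i then x else 0) L ∧ L ≠ ⊤)
    ∧
    (LSCFun a u → (∃ δ₀ : ℝ, 0 < δ₀ ∧ IsMinOnBall a u φ i x δ₀) →
      ∀ i' : Fin N, i' = i ∨ x = 0 →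
        ∃ L : EReal, HasNonlocalLimit a ν u i' (if i' = i then x else 0) L ∧ L ≠ ⊥) := by
  constructor
  · intro hu hm i' hi
    exact aux_main a ha ν Λ σ hΛ hσ1 hν u φ hφ hb hu.1 i x hx hm i' hi
  · intro hu hm i' hi
    obtain ⟨δ₀, hδ, hmin⟩ := hm
    have hφ' : C1Fun a (fun k z => -φ k z) :=
      ⟨fun k l => by simp only [hφ.1 k l], fun k => (hφ.2 k).neg⟩
    have hb' : BddFun a (fun k z => -u k z) := by
      obtain ⟨M, hM⟩ := hb
      exact ⟨M, fun k z hz => by simpa using hM k z hz⟩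
    obtain ⟨L, hL, hLt⟩ := aux_main a ha ν Λ σ hΛ hσ1 hν (fun k z => -u k z) (fun k z => -φ k z)
      hφ' hb' (fun k l => by simp only [hu.1 k l]) i x hx
      ⟨δ₀, hδ, fun j z hz hr => by have := hmin j z hz hr; linarith⟩ i' hi
    refine ⟨-L, ?_, by rw [Ne, EReal.neg_eq_bot_iff]; exact hLt⟩
    refine ((continuous_neg.tendsto L).comp hL).congr fun δ => ?_
    simp only [Function.comp, Itr]
    rw [← EReal.coe_neg, ← Finset.sum_neg_distrib]
    congr 1
    refine Finset.sum_congr rfl fun j _ => ?_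
    rw [← integral_neg]
    congr 1
    funext z
    ring

end Junction
end

section
/- Assume each H_i(x,·) is convex with a unique minimum point p_i^0(x). For any B ∈ ℝ, every viscosity flux-limited subsolution (respectively supersolution) associated with the flux limiter FL^− built from B is a viscosity subsolution (respectively supersolution) of the Kirchhoff problem λu − I_i u + H_i(x,u_{x_i}) = 0 on E_i, Σ_{i=1}^N −u_{x_i}(O) = B, u_i(a_i) = h_i. -/
open Set MeasureTheory Filter Topology

namespace Junction

variable {N : ℕ}

/-- Every viscosity flux-limited subsolution (resp. supersolution)
associated with the flux limiter `FL⁻` built from `B` is a viscosity subsolution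
(resp. supersolution) of the Kirchhoff problem. -/
theorem flux_limited_implies_kirchhoff
    {N : ℕ} [NeZero N] (a : Fin N → ℝ) (ha : ∀ i, 0 < a i)
    (ν : Fin N → Fin N → ℝ → ℝ → ℝ) (Λ σ : ℝ)
    (hΛ : 0 < Λ) (hσ0 : 0 < σ) (hσ1 : σ < 1) (hν : KernelBounds a ν Λ σ)
    (H : Fin N → ℝ → ℝ → ℝ) (CH : ℝ) (hCH : 1 < CH) (hH : HBounds a H CH)
    (p0 : Fin N → ℝ → ℝ) (hconv : ConvexUniqueMin a H p0)
    (lam : ℝ) (hlam : 0 < lam) (B : ℝ) (h : Fin N → ℝ) :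
    (∀ u : Fin N → ℝ → ℝ, FLSub lam a ν H p0 B h u → KirchhoffSub lam a ν H B h u) ∧
    (∀ v : Fin N → ℝ → ℝ, FLSuper lam a ν H p0 B h v → KirchhoffSuper lam a ν H B h v) := by
  have hm : ∀ i : Fin N, ∀ p, H i 0 (p0 i 0) ≤ H i 0 p := fun i =>
    (hconv i 0 ⟨le_rfl, (ha i).le⟩).2.1
  have hc : ∀ i : Fin N, ConvexOn ℝ univ (fun p => H i 0 p) := fun i =>
    (hconv i 0 ⟨le_rfl, (ha i).le⟩).1
  constructor
  · rintro u ⟨h1, h2, h3, h4⟩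
    refine ⟨⟨h1, h2, ?_⟩, h4⟩
    intro δ hδ φ hφ hmax
    obtain ⟨hp, hFL⟩ := h3 δ hδ φ hφ hmax
    by_contra hcon
    push Not at hcon
    obtain ⟨hG, hS⟩ := hcon
    have hgt : ∀ i, p0 i 0 < d1 a φ i 0 := by
      intro i
      by_contra hle
      have e1 := hp i
      have e2 := hG i
      simp only [G, Hplus, if_pos (not_lt.mp hle)] at e1 e2
      linarith
    obtain ⟨i0, hi0⟩ := Finite.exists_min (fun i => G lam a ν H u φ (d1 a φ i 0) i 0 δ)
    set ε := min (G lam a ν H u φ (d1 a φ i0 0) i0 0 δ) ((∑ i, -(d1 a φ i 0)) - B) with hε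
    have hεpos : 0 < ε := lt_min (hG i0) (by linarith)
    obtain ⟨p, hpε⟩ := exists_lt_of_ciInf_lt (lt_of_le_of_lt hFL hεpos)
    obtain ⟨hp1, hp2⟩ := max_lt_iff.mp hpε
    have hlt : ∀ i, p i < d1 a φ i 0 := by
      intro i
      by_contra hle
      have hle := not_lt.mp hle
      have e1 : G lam a ν (Hminus H p0) u φ (p i) i 0 δ < G lam a ν H u φ (d1 a φ i 0) i 0 δ :=
        ((le_ciSup (f := fun i => G lam a ν (Hminus H p0) u φ (p i) i 0 δ)
          (Set.finite_range _).bddAbove i).trans_lt hp1).trans_le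
          ((min_le_left _ _).trans (hi0 i))
      have e2 := (hc i).le_max_of_mem_Icc (mem_univ (p0 i 0)) (mem_univ (p i)) ⟨(hgt i).le, hle⟩
      have e3 : H i 0 (d1 a φ i 0) ≤ H i 0 (p i) := by
        simpa [max_eq_right (hm i (p i))] using e2
      simp only [G, Hminus, if_neg (not_le.mpr ((hgt i).trans_le hle))] at e1
      linarith
    have e : (∑ i, -(d1 a φ i 0)) ≤ ∑ i, -(p i) :=
      Finset.sum_le_sum fun i _ => neg_le_neg (hlt i).le
    have e' := min_le_right (G lam a ν H u φ (d1 a φ i0 0) i0 0 δ) ((∑ i, -(d1 a φ i 0)) - B)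
    linarith
  · rintro u ⟨h1, h2, h3, h4⟩
    refine ⟨⟨h1, h2, ?_⟩, h4⟩
    intro δ hδ φ hφ hmin
    have hminus : ∀ i q, H i 0 (p0 i 0) ≤ Hminus H p0 i 0 q ∧ Hminus H p0 i 0 q ≤ H i 0 q := by
      intro i q
      unfold Hminus
      split_ifs
      · exact ⟨le_rfl, hm i q⟩
      · exact ⟨hm i q, le_rfl⟩
    have hplus : ∀ i q, Hplus H p0 i 0 q ≤ H i 0 q := by
      intro i q
      unfold Hplus
      split_ifs
      · exact le_rfl
      · exact hm i q
    rcases h3 δ hδ φ hφ hmin with ⟨i, hi⟩ | hFL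
    · left
      refine ⟨i, hi.trans ?_⟩
      have := hplus i (d1 a φ i 0)
      unfold G
      linarith
    · have hb : BddBelow (range fun p : Fin N → ℝ =>
          max (⨆ i, G lam a ν (Hminus H p0) u φ (p i) i 0 δ) ((∑ i, -(p i)) - B)) := by
        refine ⟨G lam a ν H u φ (p0 0 0) 0 0 δ, ?_⟩
        rintro _ ⟨p, rfl⟩
        refine le_trans ?_ ((le_ciSup (f := fun i => G lam a ν (Hminus H p0) u φ (p i) i 0 δ)
          (Set.finite_range _).bddAbove 0).trans (le_max_left _ _))
        have := (hminus 0 (p 0)).1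
        unfold G
        linarith
      have key := hFL.trans (ciInf_le hb fun i => d1 a φ i 0)
      rcases le_max_iff.mp key with hk | hk
      · left
        obtain ⟨i, hi⟩ := exists_eq_ciSup_of_finite
          (f := fun i => G lam a ν (Hminus H p0) u φ (d1 a φ i 0) i 0 δ)
        rw [← hi] at hk
        refine ⟨i, hk.trans ?_⟩
        have := (hminus i (d1 a φ i 0)).2
        simp only [G]
        linarith
      · right
        linarith

end Junction
end
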